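/- Let G be a group, K a subgroup of G, (ρ, V) a representation of K on a complex vector space V, and χ : K → ℂˣ a homomorphism trivial on ⁅G,K⁆ ∩ K (a 'G-normal' character of K). Let ρ ⊗ χ denote the twisted representation (ρ ⊗ χ)(k) = χ(k) • ρ(k). Then for every h ∈ G there is a set-theoretic identity of intertwining spaces I_h(ρ) = I_h(ρ ⊗ χ): a linear map Λ : V → V satisfies ρ(x) ∘ Λ = Λ ∘ ρ(h⁻¹ x h) for all x ∈ K ∩ hKh⁻¹ if and only if it satisfies (ρ⊗χ)(x) ∘ Λ = Λ ∘ (ρ⊗χ)(h⁻¹ x h) for all x ∈ K ∩ hKh⁻¹. -/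

import Mathlib

/-- A character of `K` that is trivial on `⁅G,K⁆ ∩ K` takes the same value on any two elements
of `K` that are conjugate in `G`. -/
theorem map_conj_eq_of_trivial_on_commutator
    {G M : Type*} [Group G] [Group M] (K : Subgroup G) (χ : K →* M)
    (hχ : ∀ x (hx : x ∈ ⁅(⊤ : Subgroup G), K⁆ ⊓ K), χ ⟨x, hx.2⟩ = 1)
    (h x : G) (hx : x ∈ K) (hx' : h⁻¹ * x * h ∈ K) :
    χ ⟨h⁻¹ * x * h, hx'⟩ = χ ⟨x, hx⟩ := by
  have hcomm : h⁻¹ * x * h * x⁻¹ ∈ ⁅(⊤ : Subgroup G), K⁆ := by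
    simpa [commutatorElement_def] using
      Subgroup.commutator_mem_commutator (Subgroup.mem_top h⁻¹) hx
  have hone := hχ _ ⟨hcomm, K.mul_mem hx' (K.inv_mem hx)⟩
  rw [← mul_inv_eq_one, ← map_inv, ← map_mul]
  exact hone

/-- Twisting a representation of a subgroup `K ≤ G` by a `G`-normal character `χ` of `K`
(i.e. a character trivial on `⁅G,K⁆ ∩ K`) does not change the intertwining spaces:
for every `h ∈ G`, a linear map `Λ` intertwines `ρ` and its `h`-conjugate on `K ∩ hKh⁻¹`
if and only if it intertwines `ρ ⊗ χ` and its `h`-conjugate there. -/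
theorem intertwining_eq_of_twist_by_normal_char
    {G : Type*} [Group G] (K : Subgroup G)
    {V : Type*} [AddCommGroup V] [Module ℂ V]
    (ρ : Representation ℂ K V) (χ : K →* ℂˣ)
    (hχ : ∀ x (hx : x ∈ ⁅(⊤ : Subgroup G), K⁆ ⊓ K), χ ⟨x, hx.2⟩ = 1) :
    ∀ (h : G) (Λ : V →ₗ[ℂ] V),
      (∀ (x : G) (hx : x ∈ K) (hx' : h⁻¹ * x * h ∈ K),
          (ρ ⟨x, hx⟩) ∘ₗ Λ = Λ ∘ₗ (ρ ⟨h⁻¹ * x * h, hx'⟩)) ↔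
      (∀ (x : G) (hx : x ∈ K) (hx' : h⁻¹ * x * h ∈ K),
          ((χ ⟨x, hx⟩ : ℂ) • ρ ⟨x, hx⟩) ∘ₗ Λ
            = Λ ∘ₗ ((χ ⟨h⁻¹ * x * h, hx'⟩ : ℂ) • ρ ⟨h⁻¹ * x * h, hx'⟩)) := by
  intro h Λ
  refine forall_congr' fun x => forall_congr' fun hx => forall_congr' fun hx' => ?_
  rw [map_conj_eq_of_trivial_on_commutator K χ hχ h x hx hx', LinearMap.smul_comp,
    LinearMap.comp_smul]
  exact (smul_right_injective _ (χ ⟨x, hx⟩).ne_zero).eq_iff.symm
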